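/- Let H be a Hopf algebra over K and let M be a right H-Hopf module. Then the K-linear map P_R : M → M defined by P_R(m) = ∑ m₍₀₎ · S(m₍₁₎) is the projection from M onto the subspace of right coinvariants M^R = {m ∈ M : δ_R(m) = m ⊗ 1_H}; that is, P_R(m) ∈ M^R for every m ∈ M, P_R(m) = m for every m ∈ M^R, and in particular P_R ∘ P_R = P_R and Im(P_R) = M^R. -/

import Mathlib

/-!
STATEMENT 1: For a right `H`-Hopf module `M`, the map `P_R(m) = ∑ m₍₀₎ · S(m₍₁₎)`
is the projection from `M` onto the subspace of right coinvariants
`M^R = {m | δ_R(m) = m ⊗ 1}`: it takes values in `M^R`, restricts to the identity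
on `M^R`, is idempotent, and its image is exactly `M^R`.
-/

open TensorProduct Coalgebra HopfAlgebra LinearMap

/-!
If `M` is a comodule over a coalgebra `C` and `N` is a module over an algebra `A`, then the
convolution algebra `Hom(C, A)` acts on `Hom(M, N)` by `(f ⋆ g)(m) = ∑ f(m₍₀₎) · g(m₍₁₎)`.
In this notation `P = id ⋆ S`, so `P ⋆ id = id ⋆ (S * id) = id`. Applying this to `m₍₀₎` in
`δ(m) = ∑ m₍₀₎ ⊗ m₍₁₎` gives `δ = j ⋆ Δ`, where `j(m) = P(m) ⊗ 1` and `H ⊗ H` acts on `M ⊗ H`.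
Compatibility says that `δ` intertwines the actions along `Δ`, hence
`δ ∘ P = δ ⋆ (Δ ∘ S) = (j ⋆ Δ) ⋆ (Δ ∘ S) = j ⋆ (Δ * (Δ ∘ S)) = j`: the values of `P` are
coinvariant, and no formula for `Δ ∘ S` is needed.
-/

open WithConv

/-- A unital associative right action of the algebra `A` on `M`, encoded as a linear map
`M ⊗ A → M`. -/
structure IsRightModule {K A M : Type*} [CommSemiring K] [Semiring A] [Algebra K A]
    [AddCommMonoid M] [Module K M] (act : M ⊗[K] A →ₗ[K] M) : Prop where
  act_one (m : M) : act (m ⊗ₜ 1) = m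
  act_act (m : M) (a b : A) : act (act (m ⊗ₜ a) ⊗ₜ b) = act (m ⊗ₜ (a * b))

/-- A counital coassociative right coaction `δ` of the coalgebra `C` on `M`. -/
structure IsRightComodule {K C M : Type*} [CommSemiring K] [AddCommMonoid C] [Module K C]
    [Coalgebra K C] [AddCommMonoid M] [Module K M] (δ : M →ₗ[K] M ⊗[K] C) : Prop where
  coassoc (m : M) : TensorProduct.assoc K M C C (δ.rTensor C (δ m)) = comul.lTensor M (δ m)
  counital (m : M) : TensorProduct.rid K M (counit.lTensor M (δ m)) = m

/-- The componentwise action of `A ⊗ B` on `M ⊗ N`. -/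
def tensorAct {K A B M N : Type*} [CommSemiring K] [AddCommMonoid A] [Module K A]
    [AddCommMonoid B] [Module K B] [AddCommMonoid M] [Module K M] [AddCommMonoid N] [Module K N]
    (act : M ⊗[K] A →ₗ[K] M) (act' : N ⊗[K] B →ₗ[K] N) :
    (M ⊗[K] N) ⊗[K] (A ⊗[K] B) →ₗ[K] M ⊗[K] N :=
  TensorProduct.map act act' ∘ₗ (TensorProduct.tensorTensorTensorComm K M N A B).toLinearMap

@[simp]
theorem tensorAct_tmul_tmul {K A B M N : Type*} [CommSemiring K] [AddCommMonoid A] [Module K A]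
    [AddCommMonoid B] [Module K B] [AddCommMonoid M] [Module K M] [AddCommMonoid N] [Module K N]
    (act : M ⊗[K] A →ₗ[K] M) (act' : N ⊗[K] B →ₗ[K] N) (m : M) (n : N) (a : A) (b : B) :
    tensorAct act act' ((m ⊗ₜ n) ⊗ₜ (a ⊗ₜ b)) = act (m ⊗ₜ a) ⊗ₜ act' (n ⊗ₜ b) :=
  rfl

/-- A right Hopf module over the bialgebra `H`: an action `act` and a coaction `δ` such that
`δ (m · h) = δ m · Δ h`. -/
structure IsRightHopfModule {K H M : Type*} [CommSemiring K] [Semiring H] [Bialgebra K H]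
    [AddCommMonoid M] [Module K M] (act : M ⊗[K] H →ₗ[K] M) (δ : M →ₗ[K] M ⊗[K] H) : Prop
    extends IsRightModule act, IsRightComodule δ where
  compat (m : M) (h : H) :
    δ (act (m ⊗ₜ h)) = tensorAct act (LinearMap.mul' K H) (δ m ⊗ₜ comul h)

/-- The subspace of right coinvariants `{m | δ m = m ⊗ 1}`. -/
def rightCoinvariants {K H M : Type*} [CommSemiring K] [Semiring H] [Algebra K H]
    [AddCommMonoid M] [Module K M] (δ : M →ₗ[K] M ⊗[K] H) : Submodule K M :=
  LinearMap.eqLocus δ ((TensorProduct.mk K M H).flip 1)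

/-- The convolution `(f ⋆ g)(m) = ∑ f(m₍₀₎) · g(m₍₁₎)` of a map out of a comodule with a map into
an algebra, the action of the convolution algebra `Hom(C, A)` on `Hom(M, N)`. -/
def convAct {K A C M N : Type*} [CommSemiring K] [AddCommMonoid A] [Module K A]
    [AddCommMonoid C] [Module K C] [AddCommMonoid M] [Module K M] [AddCommMonoid N] [Module K N]
    (act : N ⊗[K] A →ₗ[K] N) (δ : M →ₗ[K] M ⊗[K] C)
    (f : M →ₗ[K] N) (g : WithConv (C →ₗ[K] A)) : M →ₗ[K] N :=
  act ∘ₗ TensorProduct.map f g.ofConv ∘ₗ δ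

theorem comp_convAct {K A B C M N L : Type*} [CommSemiring K] [AddCommMonoid A] [Module K A]
    [AddCommMonoid B] [Module K B] [AddCommMonoid C] [Module K C] [AddCommMonoid M] [Module K M]
    [AddCommMonoid N] [Module K N] [AddCommMonoid L] [Module K L]
    {act : N ⊗[K] A →ₗ[K] N} {act' : L ⊗[K] B →ₗ[K] L} {φ : N →ₗ[K] L} {α : A →ₗ[K] B}
    (hφ : ∀ n a, φ (act (n ⊗ₜ a)) = act' (φ n ⊗ₜ α a))
    (δ : M →ₗ[K] M ⊗[K] C) (f : M →ₗ[K] N) (g : WithConv (C →ₗ[K] A)) :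
    φ ∘ₗ convAct act δ f g = convAct act' δ (φ ∘ₗ f) (toConv (α ∘ₗ g.ofConv)) := by
  have intertwine : φ ∘ₗ act ∘ₗ TensorProduct.map f g.ofConv =
      act' ∘ₗ TensorProduct.map (φ ∘ₗ f) (α ∘ₗ g.ofConv) := by
    ext m c
    simp [hφ]
  exact congrArg (· ∘ₗ δ) intertwine

section Action

variable {K A B M N : Type*} [CommSemiring K] [Semiring A] [Algebra K A] [Semiring B] [Algebra K B]
  [AddCommMonoid M] [Module K M] [AddCommMonoid N] [Module K N]

variable (K A) in
theorem isRightModule_mul' : IsRightModule (LinearMap.mul' K A) where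
  act_one a := mul_one a
  act_act a b c := mul_assoc a b c

theorem IsRightModule.tensor {act : M ⊗[K] A →ₗ[K] M} {act' : N ⊗[K] B →ₗ[K] N}
    (hM : IsRightModule act) (hN : IsRightModule act') : IsRightModule (tensorAct act act') where
  act_one x := by
    have unital : tensorAct act act' ∘ₗ (TensorProduct.mk K (M ⊗[K] N) (A ⊗[K] B)).flip 1 =
        LinearMap.id := by
      ext m n
      simp [Algebra.TensorProduct.one_def, hM.act_one, hN.act_one]
    exact LinearMap.congr_fun unital x
  act_act x s t := by
    have assoc : tensorAct act act' ∘ₗ (tensorAct act act').rTensor (A ⊗[K] B) =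
        tensorAct act act' ∘ₗ (LinearMap.mul' K (A ⊗[K] B)).lTensor (M ⊗[K] N) ∘ₗ
          (TensorProduct.assoc K (M ⊗[K] N) (A ⊗[K] B) (A ⊗[K] B)).toLinearMap := by
      ext m n a b a' b'
      simp [hM.act_act, hN.act_act]
    exact LinearMap.congr_fun assoc ((x ⊗ₜ s) ⊗ₜ t)

end Action

section Convolution

variable {K A C M N : Type*} [CommSemiring K] [Semiring A] [Algebra K A] [AddCommMonoid C]
  [Module K C] [Coalgebra K C] [AddCommMonoid M] [Module K M] [AddCommMonoid N] [Module K N]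
  {act : N ⊗[K] A →ₗ[K] N} {δ : M →ₗ[K] M ⊗[K] C}

theorem convAct_one (hN : IsRightModule act) (hM : IsRightComodule δ) (f : M →ₗ[K] N) :
    convAct act δ f 1 = f := by
  have unital : act ∘ₗ TensorProduct.map f (1 : WithConv (C →ₗ[K] A)).ofConv =
      f ∘ₗ (TensorProduct.rid K M).toLinearMap ∘ₗ counit.lTensor M := by
    ext m c
    simp [Algebra.algebraMap_eq_smul_one, hN.act_one]
  ext m
  calc convAct act δ f 1 m
      = f (TensorProduct.rid K M (counit.lTensor M (δ m))) := LinearMap.congr_fun unital (δ m)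
    _ = f m := by rw [hM.counital]

theorem convAct_convAct (hN : IsRightModule act) (hM : IsRightComodule δ) (f : M →ₗ[K] N)
    (g h : WithConv (C →ₗ[K] A)) :
    convAct act δ (convAct act δ f g) h = convAct act δ f (g * h) := by
  have assoc : act ∘ₗ TensorProduct.map (act ∘ₗ TensorProduct.map f g.ofConv) h.ofConv =
      act ∘ₗ TensorProduct.map f (LinearMap.mul' K A ∘ₗ TensorProduct.map g.ofConv h.ofConv) ∘ₗ
        (TensorProduct.assoc K M C C).toLinearMap := by
    ext m c d
    simp [hN.act_act]
  ext m
  calc convAct act δ (convAct act δ f g) h m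
      = act (TensorProduct.map (act ∘ₗ TensorProduct.map f g.ofConv) h.ofConv
          (δ.rTensor C (δ m))) := by
        rw [← LinearMap.comp_apply (TensorProduct.map _ _), LinearMap.map_comp_rTensor]
        rfl
    _ = act (TensorProduct.map f (LinearMap.mul' K A ∘ₗ TensorProduct.map g.ofConv h.ofConv)
          (comul.lTensor M (δ m))) := by
        rw [← hM.coassoc]
        exact LinearMap.congr_fun assoc _
    _ = convAct act δ f (g * h) m := by
        rw [← LinearMap.comp_apply (TensorProduct.map _ _), LinearMap.map_comp_lTensor]
        rfl

theorem convAct_tmul_one_comul {H : Type*} [Semiring H] [Algebra K H] [Coalgebra K H]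
    {δ : M →ₗ[K] M ⊗[K] H} (hM : IsRightComodule δ) (act : N ⊗[K] H →ₗ[K] N) (f : M →ₗ[K] N) :
    convAct (tensorAct act (LinearMap.mul' K H)) δ ((TensorProduct.mk K N H).flip 1 ∘ₗ f)
      (toConv comul) = (convAct act δ f (toConv LinearMap.id)).rTensor H ∘ₗ δ := by
  set act₂ := tensorAct act (LinearMap.mul' K H)
  set j := (TensorProduct.mk K N H).flip 1 ∘ₗ f
  have regroup : act₂ ∘ₗ TensorProduct.map j LinearMap.id ∘ₗ
      (TensorProduct.assoc K M H H).toLinearMap = (act ∘ₗ f.rTensor H).rTensor H := by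
    ext m h k
    simp [act₂, j]
  ext m
  calc convAct act₂ δ j (toConv comul) m
      = act₂ (TensorProduct.map j LinearMap.id (comul.lTensor M (δ m))) := by
        rw [← LinearMap.comp_apply (TensorProduct.map _ _), LinearMap.map_comp_lTensor]
        rfl
    _ = (act ∘ₗ f.rTensor H).rTensor H (δ.rTensor H (δ m)) := by
        rw [← hM.coassoc]
        exact LinearMap.congr_fun regroup _
    _ = (convAct act δ f (toConv LinearMap.id)).rTensor H (δ m) := by
        rw [← LinearMap.rTensor_comp_apply]
        rfl

end Convolution

section HopfAlgebra

variable {K H M : Type*} [CommSemiring K] [Semiring H] [HopfAlgebra K H]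
  [AddCommMonoid M] [Module K M]

/-- The map `P_R(m) = ∑ m₍₀₎ · S(m₍₁₎)`, the projection of a right Hopf module onto its right
coinvariants. -/
def rightCoinvariantsProj (act : M ⊗[K] H →ₗ[K] M) (δ : M →ₗ[K] M ⊗[K] H) : M →ₗ[K] M :=
  act ∘ₗ (antipode K).lTensor M ∘ₗ δ

variable {act : M ⊗[K] H →ₗ[K] M} {δ : M →ₗ[K] M ⊗[K] H}

theorem rightCoinvariantsProj_eq_convAct :
    rightCoinvariantsProj act δ = convAct act δ LinearMap.id (toConv (antipode K)) :=
  rfl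

theorem convAct_rightCoinvariantsProj_id (hN : IsRightModule act) (hM : IsRightComodule δ) :
    convAct act δ (rightCoinvariantsProj act δ) (toConv LinearMap.id) = LinearMap.id := by
  rw [rightCoinvariantsProj_eq_convAct, convAct_convAct hN hM, LinearMap.antipode_mul_id,
    convAct_one hN hM]

theorem rightCoinvariantsProj_of_mem (hM : IsRightModule act) {m : M}
    (hm : m ∈ rightCoinvariants δ) : rightCoinvariantsProj act δ m = m := by
  have coinvariant : δ m = m ⊗ₜ 1 := hm
  simp [rightCoinvariantsProj, coinvariant, hM.act_one]

theorem IsRightHopfModule.comp_rightCoinvariantsProj (hM : IsRightHopfModule act δ) :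
    δ ∘ₗ rightCoinvariantsProj act δ =
      (TensorProduct.mk K M H).flip 1 ∘ₗ rightCoinvariantsProj act δ := by
  set j := (TensorProduct.mk K M H).flip 1 ∘ₗ rightCoinvariantsProj act δ
  set act₂ := tensorAct act (LinearMap.mul' K H)
  have hact₂ : IsRightModule act₂ := hM.toIsRightModule.tensor (isRightModule_mul' K H)
  have δ_eq : convAct act₂ δ j (toConv comul) = δ := by
    rw [convAct_tmul_one_comul hM.toIsRightComodule,
      convAct_rightCoinvariantsProj_id hM.toIsRightModule hM.toIsRightComodule,
      LinearMap.rTensor_id, LinearMap.id_comp]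
  calc δ ∘ₗ rightCoinvariantsProj act δ
      = convAct act₂ δ δ (toConv (comul ∘ₗ antipode K)) :=
        comp_convAct hM.compat δ LinearMap.id (toConv (antipode K))
    _ = convAct act₂ δ (convAct act₂ δ j (toConv comul)) (toConv (comul ∘ₗ antipode K)) := by
        rw [δ_eq]
    _ = convAct act₂ δ j 1 := by
        rw [convAct_convAct hact₂ hM.toIsRightComodule, LinearMap.comul_right_inv]
    _ = j := convAct_one hact₂ hM.toIsRightComodule j

theorem rightHopfModule_PR_is_projection_onto_coinvariants_general
    (hM : IsRightHopfModule act δ) :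
    LinearMap.IsProj (rightCoinvariants δ) (rightCoinvariantsProj act δ) where
  map_mem := LinearMap.congr_fun hM.comp_rightCoinvariantsProj
  map_id _ := rightCoinvariantsProj_of_mem hM.toIsRightModule

end HopfAlgebra

theorem rightHopfModule_PR_is_projection_onto_coinvariants
    (K : Type*) [Field K] [CharZero K]
    (H : Type*) [Ring H] [HopfAlgebra K H]
    (M : Type*) [AddCommGroup M] [Module K M]
    -- right H-module structure on M
    (act : M ⊗[K] H →ₗ[K] M)
    (act_one : ∀ m : M, act (m ⊗ₜ[K] (1 : H)) = m)
    (act_mul : ∀ (m : M) (h h' : H),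
      act (act (m ⊗ₜ[K] h) ⊗ₜ[K] h') = act (m ⊗ₜ[K] (h * h')))
    -- right H-comodule structure on M
    (δ : M →ₗ[K] M ⊗[K] H)
    (coassoc : ∀ m : M,
      (TensorProduct.assoc K M H H) ((δ.rTensor H) (δ m)) =
        ((Coalgebra.comul (R := K) (A := H)).lTensor M) (δ m))
    (counital : ∀ m : M,
      (TensorProduct.rid K M) (((Coalgebra.counit (R := K) (A := H)).lTensor M) (δ m)) = m)
    -- Hopf module compatibility: δ(m · h) = δ(m)Δ(h)
    (hopf_compat : ∀ (m : M) (h : H),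
      δ (act (m ⊗ₜ[K] h)) =
        (TensorProduct.map act (LinearMap.mul' K H))
          ((TensorProduct.tensorTensorTensorComm K M H H H)
            (δ m ⊗ₜ[K] Coalgebra.comul h))) :
    let PR : M →ₗ[K] M := act ∘ₗ ((antipode (R := K) (A := H)).lTensor M) ∘ₗ δ
    (∀ m : M, δ (PR m) = PR m ⊗ₜ[K] (1 : H)) ∧
    (∀ m : M, δ m = m ⊗ₜ[K] (1 : H) → PR m = m) ∧
    (PR ∘ₗ PR = PR) ∧
    (Set.range PR = {m : M | δ m = m ⊗ₜ[K] (1 : H)}) := by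
  have proj := rightHopfModule_PR_is_projection_onto_coinvariants_general
    ⟨⟨act_one, act_mul⟩, ⟨coassoc, counital⟩, hopf_compat⟩
  exact ⟨proj.map_mem, proj.map_id, proj.isIdempotentElem, congrArg SetLike.coe proj.range⟩
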